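/- arXiv:2212.11836 — 2 statements merged into one kernel-verified Lean document; each statement's English description precedes it below -/
import Mathlib

section
/- Let A be a commutative ℂ-algebra, let D_Y : A → A be a ℂ-linear derivation, and let 𝒱 be a ℂ-vector space of ℂ-linear derivations of A such that for every D_W ∈ 𝒱 the commutator [D_W, D_Y] again belongs to 𝒱. Let m be an ideal of A that contains the image D_W(A) for every D_W ∈ 𝒱, and let I be the ideal of A generated by the union of the images D_W(A) over all D_W ∈ 𝒱. Then for every n ≥ 0 the n-fold iterate D_Y^n maps I into m, i.e. D_Y^n(I) ⊆ m. -/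
/-!
The ideal `I` is itself stable under `D_Y`. By the Leibniz rule it suffices to check this on the
generators, where `D_Y (D_W a) = D_W (D_Y a) - [D_W, D_Y] a` is a difference of two generators.
Hence `D_Y^n(I) ⊆ I ⊆ m`.
-/

section ImageIdeal

variable {R A : Type*} [CommSemiring R] [CommSemiring A] [Algebra R A]

theorem derivation_mapsTo_span (D : Derivation R A A) {s : Set A}
    (hs : Set.MapsTo D s (Ideal.span s)) :
    Set.MapsTo D (Ideal.span s) (Ideal.span s) := by
  intro x hx
  induction hx using Submodule.span_induction with
  | mem x hx => exact hs hx
  | zero => simp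
  | add x y _ _ hDx hDy =>
    rw [map_add]
    exact add_mem hDx hDy
  | smul a x hx hDx =>
    rw [smul_eq_mul, D.leibniz]
    exact add_mem (Ideal.mul_mem_left _ a hDx) (Ideal.mul_mem_right _ _ hx)

/-- The ideal of `A` generated by the images of all derivations in the set `S`; for `S = 𝒱` it is
the ideal `I` of the theorem. -/
def derivationImageIdeal (S : Set (Derivation R A A)) : Ideal A :=
  Ideal.span (⋃ W ∈ S, Set.range W)

theorem apply_mem_derivationImageIdeal {S : Set (Derivation R A A)} {W : Derivation R A A}
    (hW : W ∈ S) (a : A) : W a ∈ derivationImageIdeal S :=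
  Ideal.subset_span (Set.mem_biUnion hW (Set.mem_range_self a))

theorem derivationImageIdeal_le_iff {S : Set (Derivation R A A)} {m : Ideal A} :
    derivationImageIdeal S ≤ m ↔ ∀ W ∈ S, ∀ a, W a ∈ m := by
  simp [derivationImageIdeal, Ideal.span_le, Set.range_subset_iff]

end ImageIdeal

section Commutator

variable {R A : Type*} [CommRing R] [CommRing A] [Algebra R A]

theorem derivation_apply_apply_eq_sub_commutator (D W : Derivation R A A) (a : A) :
    D (W a) = W (D a) - ⁅W, D⁆ a := by
  rw [Derivation.commutator_apply, sub_sub_cancel]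

theorem derivation_mapsTo_derivationImageIdeal {D : Derivation R A A}
    {S : Set (Derivation R A A)} (hS : ∀ W ∈ S, ⁅W, D⁆ ∈ S) :
    Set.MapsTo D (derivationImageIdeal S) (derivationImageIdeal S) := by
  refine derivation_mapsTo_span D fun x hx => ?_
  obtain ⟨W, hW, a, rfl⟩ := Set.mem_iUnion₂.mp hx
  rw [derivation_apply_apply_eq_sub_commutator]
  exact sub_mem (apply_mem_derivationImageIdeal hW (D a))
    (apply_mem_derivationImageIdeal (hS W hW) a)

theorem derivation_iterate_maps_ideal_into_ideal_general (D : Derivation R A A)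
    (S : Set (Derivation R A A)) (hS : ∀ W ∈ S, ⁅W, D⁆ ∈ S) (m : Ideal A)
    (hm : ∀ W ∈ S, ∀ a, W a ∈ m) (n : ℕ) :
    Set.MapsTo D^[n] (derivationImageIdeal S) m :=
  ((derivation_mapsTo_derivationImageIdeal hS).iterate n).mono_right
    (derivationImageIdeal_le_iff.mpr hm)

end Commutator

/-- Let `A` be a commutative `ℂ`-algebra, `DY` a `ℂ`-linear derivation of `A`,
and `V` a `ℂ`-vector space of derivations of `A` such that `⁅DW, DY⁆ ∈ V` for every `DW ∈ V`.
If `m` is an ideal of `A` containing the image of every `DW ∈ V`, and `I` is the ideal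
generated by the union of these images, then for every `n ≥ 0` the `n`-fold iterate of `DY`
maps `I` into `m`. -/
theorem derivation_iterate_maps_ideal_into_ideal
    {A : Type*} [CommRing A] [Algebra ℂ A]
    (DY : Derivation ℂ A A) (V : Submodule ℂ (Derivation ℂ A A))
    (hV : ∀ DW ∈ V, ⁅DW, DY⁆ ∈ V)
    (m : Ideal A)
    (hmV : ∀ DW ∈ V, ∀ a : A, DW a ∈ m)
    (I : Ideal A)
    (hI : I = Ideal.span (⋃ DW ∈ (V : Set (Derivation ℂ A A)), Set.range ⇑DW))
    (n : ℕ) (f : A) (hf : f ∈ I) :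
    (⇑DY)^[n] f ∈ m := by
  subst hI
  exact derivation_iterate_maps_ideal_into_ideal_general DY V hV m hmV n hf
end

section
/- Let A be a commutative ℂ-algebra, let D_Y : A → A be a ℂ-linear derivation, and let 𝒱 be a ℂ-vector space of ℂ-linear derivations of A such that for every D_W ∈ 𝒱 the commutator [D_W, D_Y] again belongs to 𝒱. Let I be the ideal of A generated by the union of the images D_W(A) over all D_W ∈ 𝒱. Then D_Y maps the radical √I into itself: D_Y(√I) ⊆ √I. (This is the algebraic form of the statement that a vector field normalizing a family of vector fields is tangent to the reduced simultaneous zero scheme of that family.) -/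
/-!
If `W` lies in the family then `Y (W a) = W (Y a) - ⁅W, Y⁆ a` lies in the ideal `I` generated by the
images of the family, so `Y` preserves `I`. In characteristic zero a derivation `D` preserving an
ideal also preserves its radical: differentiating `f ^ (n + 1) * (D f) ^ j ∈ I` and multiplying by
`D f` trades one factor `f` for two factors `D f`, up to an element of `I` and the invertible
scalar `n + 1`, so `f ^ n ∈ I` leads to `(D f) ^ (2 * n) ∈ I`.
-/

open Set

section CommSemiring

variable {R A : Type*} [CommSemiring R] [CommSemiring A] [Algebra R A] (D : Derivation R A A)

theorem derivation_mapsTo_ideal_span {s : Set A} (hs : MapsTo D s (Ideal.span s)) :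
    MapsTo D (Ideal.span s) (Ideal.span s) := by
  intro x hx
  induction hx using Submodule.span_induction with
  | mem x hx => exact hs hx
  | zero => simp
  | add x y _ _ hDx hDy => exact (map_add D x y).symm ▸ add_mem hDx hDy
  | smul a x hx hDx =>
    rw [smul_eq_mul, D.leibniz]
    exact add_mem (Ideal.mul_mem_left _ a hDx) (Ideal.mul_mem_right (D a) _ hx)

theorem mul_derivation_pow (a : A) (n : ℕ) : a * D (a ^ n) = n * a ^ n * D a := by
  rw [D.leibniz_pow]
  cases n with
  | zero => simp
  | succ n =>
    simp only [Nat.add_sub_cancel, smul_eq_mul, nsmul_eq_mul]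
    ring

theorem derivation_mul_derivation_pow_succ_mul_pow (f : A) (n j : ℕ) :
    D f * D (f ^ (n + 1) * D f ^ j) =
      (n + 1 : ℕ) * (f ^ n * D f ^ (j + 2)) + j * D (D f) * (f ^ (n + 1) * D f ^ j) := by
  calc D f * D (f ^ (n + 1) * D f ^ j)
      = f ^ (n + 1) * (D f * D (D f ^ j)) + D f * (D f ^ j * D (f ^ (n + 1))) := by
        rw [D.leibniz, smul_eq_mul, smul_eq_mul]
        ring
    _ = f ^ (n + 1) * (j * D f ^ j * D (D f)) +
          D f * (D f ^ j * ((n + 1 : ℕ) * (f ^ n * D f))) := by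
        rw [mul_derivation_pow, D.leibniz_pow, nsmul_eq_mul, smul_eq_mul, Nat.add_sub_cancel]
    _ = _ := by ring

end CommSemiring

section Radical

theorem natCast_mul_mem_ideal_iff {A : Type*} [CommSemiring A] [Algebra ℚ A] (I : Ideal A) {n : ℕ}
    (hn : n ≠ 0) {x : A} : n * x ∈ I ↔ x ∈ I := by
  have smul_mem := (I.restrictScalars ℚ).smul_mem_iff (x := x) (Nat.cast_ne_zero (R := ℚ).mpr hn)
  simpa only [Nat.cast_smul_eq_nsmul, nsmul_eq_mul, Submodule.restrictScalars_mem] using smul_mem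

variable {R A : Type*} [CommSemiring R] [CommRing A] [Algebra R A] [Algebra ℚ A]
  {D : Derivation R A A} {I : Ideal A}

theorem pow_mul_derivation_pow_add_two_mem (hD : MapsTo D I I) {f : A} {n j : ℕ}
    (h : f ^ (n + 1) * D f ^ j ∈ I) : f ^ n * D f ^ (j + 2) ∈ I := by
  have hDh : D f * D (f ^ (n + 1) * D f ^ j) ∈ I := I.mul_mem_left _ (hD h)
  rw [derivation_mul_derivation_pow_succ_mul_pow,
    I.add_mem_iff_left (I.mul_mem_left _ h)] at hDh
  exact (natCast_mul_mem_ideal_iff I n.succ_ne_zero).mp hDh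

theorem derivation_pow_mem_of_pow_mul_derivation_pow_mem (hD : MapsTo D I I) {f : A} {n j : ℕ}
    (h : f ^ n * D f ^ j ∈ I) : D f ^ (j + 2 * n) ∈ I := by
  induction n generalizing j with
  | zero => simpa using h
  | succ n ih =>
    rw [show j + 2 * (n + 1) = j + 2 + 2 * n by ring]
    exact ih (pow_mul_derivation_pow_add_two_mem hD h)

theorem derivation_mapsTo_radical (hD : MapsTo D I I) : MapsTo D I.radical I.radical := by
  rintro f ⟨n, hn⟩
  exact ⟨0 + 2 * n, derivation_pow_mem_of_pow_mul_derivation_pow_mem hD (by simpa using hn)⟩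

end Radical

section Normalizer

variable {R A : Type*} [CommRing R] [CommRing A] [Algebra R A]
  {Y : Derivation R A A} {S : Set (Derivation R A A)}

theorem derivation_mapsTo_span_iUnion_range (hS : ∀ W ∈ S, ⁅W, Y⁆ ∈ S) :
    MapsTo Y (Ideal.span (⋃ W ∈ S, range W)) (Ideal.span (⋃ W ∈ S, range W)) := by
  have apply_mem : ∀ W ∈ S, ∀ a, W a ∈ Ideal.span (⋃ W ∈ S, range W) := fun W hW a =>
    Ideal.subset_span (mem_biUnion hW (mem_range_self a))
  refine derivation_mapsTo_ideal_span Y fun x hx => ?_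
  obtain ⟨W, hW, a, rfl⟩ := mem_iUnion₂.mp hx
  have hYW : Y (W a) = W (Y a) - ⁅W, Y⁆ a := by
    rw [Derivation.commutator_apply, sub_sub_cancel]
  rw [hYW]
  exact sub_mem (apply_mem W hW (Y a)) (apply_mem _ (hS W hW) a)

theorem derivation_normalizer_preserves_radical_general [Algebra ℚ A]
    (hS : ∀ W ∈ S, ⁅W, Y⁆ ∈ S) :
    MapsTo Y (Ideal.span (⋃ W ∈ S, range W)).radical (Ideal.span (⋃ W ∈ S, range W)).radical :=
  derivation_mapsTo_radical (derivation_mapsTo_span_iUnion_range hS)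

end Normalizer

/-- Let `A` be a commutative `ℂ`-algebra, `DY` a `ℂ`-linear derivation of `A`,
and `V` a `ℂ`-vector space of derivations of `A` such that `⁅DW, DY⁆ ∈ V` for every `DW ∈ V`.
Let `I` be the ideal generated by the union of the images `DW(A)` over `DW ∈ V`.  Then `DY`
maps the radical `√I` into itself. -/
theorem derivation_normalizer_preserves_radical
    {A : Type*} [CommRing A] [Algebra ℂ A]
    (DY : Derivation ℂ A A) (V : Submodule ℂ (Derivation ℂ A A))
    (hV : ∀ DW ∈ V, ⁅DW, DY⁆ ∈ V)
    (I : Ideal A)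
    (hI : I = Ideal.span (⋃ DW ∈ (V : Set (Derivation ℂ A A)), Set.range ⇑DW))
    (f : A) (hf : f ∈ I.radical) :
    DY f ∈ I.radical := by
  let : Algebra ℚ A := Algebra.compHom A (algebraMap ℚ ℂ)
  subst hI
  exact derivation_normalizer_preserves_radical_general hV hf
end
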